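/- Let D = B_R(0) and X = B_r(0) be concentric balls of radii r ≪ R in n-dimensional Euclidean space, and define the normalized traffic load λ_t(X) = (1/vol(D)²) ∫∫_{D×D} length(X ∩ [s,t]) ds dt, where [s,t] is the straight segment from s to t. Then there exist constants 0 < c ≤ C depending only on n such that c·r^n/R^{n-1} ≤ λ_t(B_r(0)) ≤ C·r^n/R^{n-1} for all 0 < r ≤ R/2 and R ≥ 1. -/

import Mathlib

open MeasureTheory

/-!
Parametrizing `[s, t]` by `u ∈ [0, 1]` gives
`length (X ∩ [s, t]) = |s - t| · |{u ∈ [0, 1] | s + u (t - s) ∈ X}|`. For fixed `s` and `u` the map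
`t ↦ s + u (t - s)` is a homothety of ratio `u`, so it pulls `X` back to a set of measure
`u ^ (-n) μ(X)`. By Fubini, the pairs in `D × D` whose point at time `u` lies in `X` have measure at
most `2 ^ n μ(X) μ(D)`: use the homothety in `t` if `u ≥ 1/2`, and the one in `s` otherwise. With
`|s - t| ≤ diam D` this is the upper bound. For the lower bound, let `D` have radius `R` and let `X`
lie in the concentric ball of radius `R / 2`. Keep only `u ∈ [3/4, 1]`, for which the preimage of
`X` stays inside `D`, and `s` at distance at least `3 R / 4` from the centre, for which a segment
meeting `X` is at least `R / 4` long. Both bounds are multiples of `R μ(X) / μ(D)`.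
-/

section TrafficLoad

open AffineMap Metric Module Set
open scoped ENNReal

theorem le_infEDist_of_subset_ball {M : Type*} [PseudoMetricSpace M] {X : Set M} {z s : M} {a b : ℝ}
    (hX : X ⊆ ball z a) (hs : b ≤ dist s z) : ENNReal.ofReal (b - a) ≤ infEDist s X := by
  refine le_infEDist.2 fun x hx => ?_
  rw [edist_dist]
  refine ENNReal.ofReal_le_ofReal ?_
  linarith [dist_triangle s x z, mem_ball.1 (hX hx)]

variable {E : Type*} [NormedAddCommGroup E] [NormedSpace ℝ E]

theorem mem_ball_of_lineMap_mem_ball {z s t : E} {R u : ℝ} (hs : s ∈ ball z R)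
    (hu : u ∈ Icc (3 / 4 : ℝ) 1) (h : lineMap s t u ∈ ball z (R / 2)) : t ∈ ball z R := by
  rw [mem_ball_iff_norm] at hs h ⊢
  have hu0 : 0 ≤ u := by linarith [hu.1]
  have hsplit : u • (t - z) = (lineMap s t u - z) - (1 - u) • (s - z) := by
    rw [lineMap_apply_module]
    module
  have hnorm : u * ‖t - z‖ ≤ ‖lineMap s t u - z‖ + (1 - u) * ‖s - z‖ := by
    simpa only [← hsplit, norm_smul, Real.norm_of_nonneg hu0,
      Real.norm_of_nonneg (sub_nonneg.2 hu.2)] using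
      norm_sub_le (lineMap s t u - z) ((1 - u) • (s - z))
  nlinarith [hu.1, hu.2, norm_nonneg (s - z)]

variable [MeasurableSpace E] [BorelSpace E]

/-- The normalized traffic load `λ(X)` of uniform traffic in the region `D`: the integral of the
length of `[s, t] ∩ X` over all source-target pairs `(s, t) ∈ D × D`, divided by `μ(D) ^ 2`. Length
is one-dimensional Hausdorff measure. -/
noncomputable def trafficLoad (μ : Measure E) (D X : Set E) : ℝ :=
  (∫ s in D, ∫ t in D, (μH[1] (segment ℝ s t ∩ X)).toReal ∂μ ∂μ) / μ.real D ^ 2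

theorem hausdorffMeasure_segment_inter (s t : E) (X : Set E) :
    μH[1] (segment ℝ s t ∩ X) = edist s t * volume (lineMap s t ⁻¹' X ∩ Icc (0 : ℝ) 1) := by
  rw [segment_eq_image_lineMap, ← image_inter_preimage, inter_comm, hausdorffMeasure_lineMap_image,
    hausdorffMeasure_real, edist_nndist, ENNReal.smul_def, smul_eq_mul]

theorem infEDist_mul_volume_le_hausdorffMeasure_segment_inter (s t : E) (X : Set E) {J : Set ℝ}
    (hJ : J ⊆ Icc 0 1) :
    infEDist s X * volume (lineMap s t ⁻¹' X ∩ J) ≤ μH[1] (segment ℝ s t ∩ X) := by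
  rw [hausdorffMeasure_segment_inter]
  obtain hempty | ⟨u, huX, huJ⟩ := (lineMap s t ⁻¹' X ∩ J).eq_empty_or_nonempty
  · simp [hempty]
  have hdist : infEDist s X ≤ edist s t := by
    refine (infEDist_le_edist_of_mem (mem_preimage.1 huX)).trans ?_
    rw [edist_dist, edist_dist, dist_left_lineMap, Real.norm_of_nonneg (hJ huJ).1]
    exact ENNReal.ofReal_le_ofReal (mul_le_of_le_one_left dist_nonneg (hJ huJ).2)
  gcongr

section Parametrization

variable {X : Set E}

theorem volume_preimage_lineMap_inter (hX : MeasurableSet X) (s t : E) (J : Set ℝ) :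
    volume (lineMap s t ⁻¹' X ∩ J) = volume.restrict J (lineMap s t ⁻¹' X) :=
  (Measure.restrict_apply ((by fun_prop : Continuous (lineMap s t : ℝ → E)).measurable hX)).symm

variable [SecondCountableTopology E]

theorem measurableSet_setOf_lineMap_mem (hX : MeasurableSet X) (u : ℝ) :
    MeasurableSet {p : E × E | lineMap p.1 p.2 u ∈ X} :=
  (by fun_prop : Continuous fun p : E × E => lineMap p.1 p.2 u).measurable hX

theorem measurableSet_setOf_lineMap_mem_uncurry (hX : MeasurableSet X) :
    MeasurableSet {q : (E × E) × ℝ | lineMap q.1.1 q.1.2 q.2 ∈ X} :=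
  (by fun_prop : Continuous fun q : (E × E) × ℝ => lineMap q.1.1 q.1.2 q.2).measurable hX

theorem measurable_volume_preimage_lineMap_inter (hX : MeasurableSet X) (J : Set ℝ) :
    Measurable fun p : E × E => volume (lineMap p.1 p.2 ⁻¹' X ∩ J) := by
  simp_rw [volume_preimage_lineMap_inter hX]
  exact measurable_measure_prodMk_left (measurableSet_setOf_lineMap_mem_uncurry hX)

theorem measurable_hausdorffMeasure_segment_inter (hX : MeasurableSet X) :
    Measurable fun p : E × E => μH[1] (segment ℝ p.1 p.2 ∩ X) := by
  simp_rw [hausdorffMeasure_segment_inter]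
  exact measurable_edist.mul (measurable_volume_preimage_lineMap_inter hX _)

theorem lintegral_volume_preimage_lineMap_inter (ρ : Measure (E × E)) [SFinite ρ]
    (hX : MeasurableSet X) (J : Set ℝ) :
    ∫⁻ p, volume (lineMap p.1 p.2 ⁻¹' X ∩ J) ∂ρ =
      ∫⁻ u in J, ρ {p | lineMap p.1 p.2 u ∈ X} := by
  have hW := measurableSet_setOf_lineMap_mem_uncurry hX
  simp_rw [volume_preimage_lineMap_inter hX]
  exact (Measure.prod_apply hW).symm.trans (Measure.prod_apply_symm hW)

theorem prod_self_setOf_lineMap_one_sub_mem (ν : Measure E) [SFinite ν] (hX : MeasurableSet X)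
    (u : ℝ) :
    ν.prod ν {p | lineMap p.1 p.2 (1 - u) ∈ X} = ν.prod ν {p | lineMap p.1 p.2 u ∈ X} := by
  simp_rw [lineMap_apply_one_sub]
  exact Measure.measurePreserving_swap.measure_preimage
    (measurableSet_setOf_lineMap_mem hX u).nullMeasurableSet

end Parametrization

variable [FiniteDimensional ℝ E] (μ : Measure E) [μ.IsAddHaarMeasure] {D X : Set E}

theorem addHaar_preimage_lineMap (s : E) {u : ℝ} (hu : u ≠ 0) (X : Set E) :
    μ ((fun t => lineMap s t u) ⁻¹' X) = ENNReal.ofReal |(u ^ finrank ℝ E)⁻¹| * μ X := by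
  have hcomp : (fun t => lineMap s t u) ⁻¹' X = (u • ·) ⁻¹' ((· + (1 - u) • s) ⁻¹' X) := by
    ext t
    simp only [mem_preimage, lineMap_apply_module, add_comm]
  rw [hcomp, Measure.addHaar_preimage_smul μ hu, measure_preimage_add_right]

theorem prod_addHaar_setOf_lineMap_mem (ν : Measure E) [SFinite ν] {u : ℝ} (hu : u ≠ 0)
    (hX : MeasurableSet X) :
    ν.prod μ {p | lineMap p.1 p.2 u ∈ X} =
      ENNReal.ofReal |(u ^ finrank ℝ E)⁻¹| * μ X * ν univ := by
  rw [Measure.prod_apply (measurableSet_setOf_lineMap_mem hX u), ← lintegral_const]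
  exact lintegral_congr fun s => addHaar_preimage_lineMap μ s hu X

theorem prod_restrict_setOf_lineMap_mem_le (hX : MeasurableSet X) (u : ℝ) :
    (μ.restrict D).prod (μ.restrict D) {p | lineMap p.1 p.2 u ∈ X} ≤
      2 ^ finrank ℝ E * μ X * μ D := by
  wlog hu : 1 / 2 ≤ u generalizing u
  · rw [← prod_self_setOf_lineMap_one_sub_mem _ hX]
    exact this (1 - u) (by linarith)
  have hu0 : 0 < u := by linarith
  have hscale : ENNReal.ofReal |(u ^ finrank ℝ E)⁻¹| ≤ 2 ^ finrank ℝ E := by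
    rw [← ENNReal.ofReal_ofNat, ← ENNReal.ofReal_pow zero_le_two, abs_of_pos (by positivity),
      ← inv_pow]
    refine ENNReal.ofReal_le_ofReal (pow_le_pow_left₀ (by positivity) ?_ _)
    exact inv_le_of_inv_le₀ two_pos (by linarith)
  calc (μ.restrict D).prod (μ.restrict D) {p | lineMap p.1 p.2 u ∈ X}
      ≤ (μ.restrict D).prod μ {p | lineMap p.1 p.2 u ∈ X} :=
        Measure.prod_mono le_rfl Measure.restrict_le_self _
    _ = ENNReal.ofReal |(u ^ finrank ℝ E)⁻¹| * μ X * μ D := by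
        rw [prod_addHaar_setOf_lineMap_mem μ _ hu0.ne' hX, Measure.restrict_apply_univ]
    _ ≤ 2 ^ finrank ℝ E * μ X * μ D := by gcongr

theorem setLIntegral_hausdorffMeasure_segment_inter_le (hD : MeasurableSet D)
    (hX : MeasurableSet X) :
    ∫⁻ p in D ×ˢ D, μH[1] (segment ℝ p.1 p.2 ∩ X) ∂μ.prod μ ≤
      ediam D * (2 ^ finrank ℝ E * μ X * μ D) := by
  calc ∫⁻ p in D ×ˢ D, μH[1] (segment ℝ p.1 p.2 ∩ X) ∂μ.prod μ
      ≤ ∫⁻ p in D ×ˢ D, ediam D * volume (lineMap p.1 p.2 ⁻¹' X ∩ Icc (0 : ℝ) 1) ∂μ.prod μ := by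
        refine setLIntegral_mono' (hD.prod hD) fun p hp => ?_
        rw [hausdorffMeasure_segment_inter]
        gcongr
        exact edist_le_ediam_of_mem hp.1 hp.2
    _ = ediam D * ∫⁻ u in Icc (0 : ℝ) 1,
          (μ.restrict D).prod (μ.restrict D) {p | lineMap p.1 p.2 u ∈ X} := by
        rw [lintegral_const_mul _ (measurable_volume_preimage_lineMap_inter hX _),
          ← Measure.prod_restrict, lintegral_volume_preimage_lineMap_inter _ hX]
    _ ≤ ediam D * ∫⁻ _ in Icc (0 : ℝ) 1, 2 ^ finrank ℝ E * μ X * μ D := by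
        gcongr with u
        exact prod_restrict_setOf_lineMap_mem_le μ hX u
    _ = ediam D * (2 ^ finrank ℝ E * μ X * μ D) := by simp

theorem le_prod_restrict_setOf_lineMap_mem {z : E} {R u : ℝ} {A : Set E} (hA : A ⊆ ball z R)
    (hX : MeasurableSet X) (hXR : X ⊆ ball z (R / 2)) (hu : u ∈ Icc (3 / 4 : ℝ) 1) :
    μ X * μ A ≤ (μ.restrict A).prod (μ.restrict (ball z R)) {p | lineMap p.1 p.2 u ∈ X} := by
  have hu0 : 0 < u := by linarith [hu.1]
  have hS := measurableSet_setOf_lineMap_mem hX u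
  have hscale : 1 ≤ ENNReal.ofReal |(u ^ finrank ℝ E)⁻¹| := by
    rw [ENNReal.one_le_ofReal, abs_of_pos (by positivity)]
    exact one_le_inv_iff₀.2 ⟨by positivity, pow_le_one₀ hu0.le hu.2⟩
  have htarget : {p : E × E | lineMap p.1 p.2 u ∈ X} ∩ A ×ˢ univ ⊆
      {p | lineMap p.1 p.2 u ∈ X} ∩ A ×ˢ ball z R := fun p hp =>
    ⟨hp.1, hp.2.1, mem_ball_of_lineMap_mem_ball (hA hp.2.1) hu (hXR hp.1)⟩
  calc μ X * μ A ≤ ENNReal.ofReal |(u ^ finrank ℝ E)⁻¹| * μ X * μ A := by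
        gcongr
        exact le_mul_of_one_le_left' hscale
    _ = (μ.restrict A).prod (μ.restrict univ) {p | lineMap p.1 p.2 u ∈ X} := by
        rw [Measure.restrict_univ, prod_addHaar_setOf_lineMap_mem μ _ hu0.ne' hX,
          Measure.restrict_apply_univ]
    _ ≤ (μ.restrict A).prod (μ.restrict (ball z R)) {p | lineMap p.1 p.2 u ∈ X} := by
        rw [Measure.prod_restrict, Measure.prod_restrict, Measure.restrict_apply hS,
          Measure.restrict_apply hS]
        exact measure_mono htarget

theorem le_setLIntegral_hausdorffMeasure_segment_inter {z : E} {R : ℝ} (hX : MeasurableSet X)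
    (hXR : X ⊆ ball z (R / 2)) :
    ENNReal.ofReal (R / 4) *
        (μ X * μ (ball z R \ ball z (3 / 4 * R)) * ENNReal.ofReal (1 / 4)) ≤
      ∫⁻ p in ball z R ×ˢ ball z R, μH[1] (segment ℝ p.1 p.2 ∩ X) ∂μ.prod μ := by
  set A := ball z R \ ball z (3 / 4 * R)
  have hA : A ⊆ ball z R := sdiff_subset
  have hlate : volume (Icc (3 / 4 : ℝ) 1) = ENNReal.ofReal (1 / 4) := by
    rw [Real.volume_Icc]
    norm_num
  calc ENNReal.ofReal (R / 4) * (μ X * μ A * ENNReal.ofReal (1 / 4))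
      ≤ ENNReal.ofReal (R / 4) * ∫⁻ u in Icc (3 / 4 : ℝ) 1,
          (μ.restrict A).prod (μ.restrict (ball z R)) {p | lineMap p.1 p.2 u ∈ X} := by
        rw [← hlate, ← setLIntegral_const]
        gcongr ENNReal.ofReal (R / 4) * ?_
        exact setLIntegral_mono' measurableSet_Icc fun u hu =>
          le_prod_restrict_setOf_lineMap_mem μ hA hX hXR hu
    _ = ∫⁻ p in A ×ˢ ball z R, ENNReal.ofReal (R / 4) *
          volume (lineMap p.1 p.2 ⁻¹' X ∩ Icc (3 / 4 : ℝ) 1) ∂μ.prod μ := by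
        rw [lintegral_const_mul _ (measurable_volume_preimage_lineMap_inter hX _),
          ← Measure.prod_restrict, lintegral_volume_preimage_lineMap_inter _ hX]
    _ ≤ ∫⁻ p in A ×ˢ ball z R, μH[1] (segment ℝ p.1 p.2 ∩ X) ∂μ.prod μ := by
        refine setLIntegral_mono' ((measurableSet_ball.diff measurableSet_ball).prod
          measurableSet_ball) fun p hp => ?_
        refine le_trans ?_ (infEDist_mul_volume_le_hausdorffMeasure_segment_inter p.1 p.2 X
          (Icc_subset_Icc_left (by norm_num : (0 : ℝ) ≤ 3 / 4)))
        gcongr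
        rw [show R / 4 = 3 / 4 * R - R / 2 by ring]
        exact le_infEDist_of_subset_ball hXR (not_lt.1 hp.1.2)
    _ ≤ ∫⁻ p in ball z R ×ˢ ball z R, μH[1] (segment ℝ p.1 p.2 ∩ X) ∂μ.prod μ :=
        lintegral_mono_set (prod_mono hA Subset.rfl)

theorem setLIntegral_hausdorffMeasure_segment_inter_ne_top (hD : MeasurableSet D)
    (hDb : Bornology.IsBounded D) (hX : MeasurableSet X) (hXfin : μ X ≠ ∞) :
    ∫⁻ p in D ×ˢ D, μH[1] (segment ℝ p.1 p.2 ∩ X) ∂μ.prod μ ≠ ∞ :=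
  ne_top_of_le_ne_top (by finiteness [hDb.ediam_ne_top, hDb.measure_lt_top (μ := μ)])
    (setLIntegral_hausdorffMeasure_segment_inter_le μ hD hX)

theorem trafficLoad_eq_toReal_setLIntegral_div (hD : MeasurableSet D)
    (hDb : Bornology.IsBounded D) (hX : MeasurableSet X) (hXfin : μ X ≠ ∞) :
    trafficLoad μ D X =
      (∫⁻ p in D ×ˢ D, μH[1] (segment ℝ p.1 p.2 ∩ X) ∂μ.prod μ).toReal / μ.real D ^ 2 := by
  have hmeas := measurable_hausdorffMeasure_segment_inter hX
  have hfin := setLIntegral_hausdorffMeasure_segment_inter_ne_top μ hD hDb hX hXfin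
  rw [trafficLoad, ← setIntegral_prod (fun p : E × E => (μH[1] (segment ℝ p.1 p.2 ∩ X)).toReal)
      (integrable_toReal_of_lintegral_ne_top hmeas.aemeasurable hfin),
    integral_toReal hmeas.aemeasurable (ae_lt_top hmeas hfin)]

theorem trafficLoad_le (hD : MeasurableSet D) (hDb : Bornology.IsBounded D)
    (hX : MeasurableSet X) (hXfin : μ X ≠ ∞) :
    trafficLoad μ D X ≤ 2 ^ finrank ℝ E * diam D * μ.real X / μ.real D := by
  rw [trafficLoad_eq_toReal_setLIntegral_div μ hD hDb hX hXfin]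
  calc _ ≤ (ediam D * (2 ^ finrank ℝ E * μ X * μ D)).toReal / μ.real D ^ 2 := by
        gcongr
        · finiteness [hDb.ediam_ne_top, hDb.measure_lt_top (μ := μ)]
        · exact setLIntegral_hausdorffMeasure_segment_inter_le μ hD hX
    _ = 2 ^ finrank ℝ E * diam D * μ.real X * μ.real D / (μ.real D * μ.real D) := by
        simp only [ENNReal.toReal_mul, ENNReal.toReal_pow, ENNReal.toReal_ofNat, diam,
          measureReal_def]
        ring
    _ = 2 ^ finrank ℝ E * diam D * μ.real X / μ.real D := by
        field_simp

variable [Nontrivial E]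

theorem addHaar_real_ball (z : E) {r : ℝ} (hr : 0 ≤ r) :
    μ.real (ball z r) = r ^ finrank ℝ E * μ.real (ball 0 1) := by
  rw [← Measure.addHaar_real_closedBall_eq_addHaar_real_ball,
    Measure.addHaar_real_closedBall μ z hr]

theorem le_addHaar_real_annulus (z : E) {R : ℝ} (hR : 0 ≤ R) :
    μ.real (ball z R) / 4 ≤ μ.real (ball z R \ ball z (3 / 4 * R)) := by
  have hpow : (3 / 4 : ℝ) ^ finrank ℝ E ≤ 3 / 4 :=
    pow_le_of_le_one (by norm_num) (by norm_num) finrank_pos.ne'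
  have hinner : μ.real (ball z (3 / 4 * R)) ≤ 3 / 4 * μ.real (ball z R) := by
    rw [addHaar_real_ball μ z hR, addHaar_real_ball μ z (by positivity), mul_pow, mul_assoc]
    gcongr
  rw [measureReal_sdiff (ball_subset_ball (by linarith)) measurableSet_ball]
  linarith

theorem le_trafficLoad_ball {z : E} {R : ℝ} (hR : 0 < R) (hX : MeasurableSet X)
    (hXR : X ⊆ ball z (R / 2)) :
    1 / 64 * R * μ.real X / μ.real (ball z R) ≤ trafficLoad μ (ball z R) X := by
  have hXfin : μ X ≠ ∞ := ne_top_of_le_ne_top measure_ball_lt_top.ne (measure_mono hXR)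
  have hball : 0 < μ.real (ball z R) :=
    ENNReal.toReal_pos (measure_ball_pos μ z hR).ne' measure_ball_lt_top.ne
  rw [trafficLoad_eq_toReal_setLIntegral_div μ measurableSet_ball isBounded_ball hX hXfin]
  calc 1 / 64 * R * μ.real X / μ.real (ball z R)
      = R / 4 * (μ.real X * (μ.real (ball z R) / 4) * (1 / 4)) / μ.real (ball z R) ^ 2 := by
        field_simp
        ring
    _ ≤ R / 4 * (μ.real X * μ.real (ball z R \ ball z (3 / 4 * R)) * (1 / 4)) /
          μ.real (ball z R) ^ 2 := by
        gcongr
        exact le_addHaar_real_annulus μ z hR.le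
    _ = (ENNReal.ofReal (R / 4) * (μ X * μ (ball z R \ ball z (3 / 4 * R)) *
          ENNReal.ofReal (1 / 4))).toReal / μ.real (ball z R) ^ 2 := by
        simp only [ENNReal.toReal_mul, measureReal_def]
        rw [ENNReal.toReal_ofReal (by positivity), ENNReal.toReal_ofReal (by positivity)]
    _ ≤ _ := by
        gcongr
        · exact setLIntegral_hausdorffMeasure_segment_inter_ne_top μ measurableSet_ball
            isBounded_ball hX hXfin
        · exact le_setLIntegral_hausdorffMeasure_segment_inter μ hX hXR

theorem mul_addHaar_real_ball_div_addHaar_real_ball (z : E) {R r : ℝ} (hR : 0 < R) (hr : 0 ≤ r) :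
    R * μ.real (ball z r) / μ.real (ball z R) = r ^ finrank ℝ E / R ^ (finrank ℝ E - 1) := by
  have hunit : μ.real (ball (0 : E) 1) ≠ 0 :=
    (ENNReal.toReal_pos (measure_ball_pos μ _ one_pos).ne' measure_ball_lt_top.ne).ne'
  rw [addHaar_real_ball μ z hR.le, addHaar_real_ball μ z hr, ← mul_assoc,
    mul_div_mul_right _ _ hunit, ← mul_pow_sub_one finrank_pos.ne' R, mul_div_mul_left _ _ hR.ne']

theorem stmt8_general (z : E) {R r : ℝ} (hr : 0 < r) (hrR : r ≤ R / 2) :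
    1 / 64 * r ^ finrank ℝ E / R ^ (finrank ℝ E - 1) ≤ trafficLoad μ (ball z R) (ball z r) ∧
      trafficLoad μ (ball z R) (ball z r) ≤
        2 ^ (finrank ℝ E + 1) * r ^ finrank ℝ E / R ^ (finrank ℝ E - 1) := by
  have hR : 0 < R := by linarith
  simp_rw [mul_div_assoc, ← mul_addHaar_real_ball_div_addHaar_real_ball μ z hR hr.le]
  constructor
  · have hlower := le_trafficLoad_ball μ hR measurableSet_ball (ball_subset_ball (x := z) hrR)
    simpa only [mul_assoc, mul_div_assoc] using hlower
  · calc trafficLoad μ (ball z R) (ball z r)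
        ≤ 2 ^ finrank ℝ E * diam (ball z R) * μ.real (ball z r) / μ.real (ball z R) :=
          trafficLoad_le μ measurableSet_ball isBounded_ball measurableSet_ball
            measure_ball_lt_top.ne
      _ ≤ 2 ^ finrank ℝ E * (2 * R) * μ.real (ball z r) / μ.real (ball z R) := by
          gcongr
          exact diam_ball hR.le
      _ = 2 ^ (finrank ℝ E + 1) * (R * μ.real (ball z r) / μ.real (ball z R)) := by ring

end TrafficLoad

/- STATEMENT 8: in n-dimensional Euclidean space, with
   λ_t(B_r(0)) = (1/vol(B_R(0))²) ∫∫_{B_R×B_R} length([s,t] ∩ B_r(0)) ds dt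
   (length = 1-dimensional Hausdorff measure of the straight segment ∩ ball),
   there are constants 0 < c ≤ C depending only on n with
   c·rⁿ/R^{n-1} ≤ λ_t(B_r(0)) ≤ C·rⁿ/R^{n-1} for all 0 < r ≤ R/2, R ≥ 1. -/
theorem stmt8 (n : ℕ) (hn : 1 ≤ n) :
    ∃ c C : ℝ, 0 < c ∧ c ≤ C ∧
      ∀ R r : ℝ, 1 ≤ R → 0 < r → r ≤ R / 2 →
        ∀ lam : ℝ,
          lam = (∫ s in Metric.ball (0 : EuclideanSpace ℝ (Fin n)) R,
                  ∫ t in Metric.ball (0 : EuclideanSpace ℝ (Fin n)) R,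
                    (μH[1] (segment ℝ s t ∩ Metric.ball 0 r)).toReal) /
                (volume (Metric.ball (0 : EuclideanSpace ℝ (Fin n)) R)).toReal ^ 2 →
          c * r ^ n / R ^ (n - 1) ≤ lam ∧ lam ≤ C * r ^ n / R ^ (n - 1) := by
  have : Nonempty (Fin n) := ⟨⟨0, hn⟩⟩
  refine ⟨1 / 64, 2 ^ (n + 1), by norm_num, le_trans (by norm_num) (one_le_pow₀ one_le_two), ?_⟩
  rintro R r - hr hrR lam rfl
  simpa only [finrank_euclideanSpace_fin, trafficLoad, Measure.real] using
    stmt8_general volume (0 : EuclideanSpace ℝ (Fin n)) hr hrR
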